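/- Let Δ > δ ≥ 1 be integers. The complete bipartite graph K_{Δ,δ}, which has n = Δ+δ vertices, m = Δδ edges, maximum degree Δ, and minimum degree δ, satisfies δ ≤ 2m/n ≤ 2Δδ/(Δ+δ) and irr(K_{Δ,δ}) = 2Δm − δΔn, i.e., the bound of Proposition 2 holds with equality for K_{Δ,δ}. -/

import Mathlib

open Finset SimpleGraph

/-- The irregularity of a graph: `irr G = ∑_{uv ∈ E(G)} |d_G(u) - d_G(v)|`. -/
def irr {V : Type*} [Fintype V] (G : SimpleGraph V) [DecidableRel G.Adj] : ℤ :=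
  ∑ e ∈ G.edgeFinset, Sym2.lift ⟨fun u v => |(G.degree u : ℤ) - (G.degree v : ℤ)|,
    fun u v => by simp [abs_sub_comm]⟩ e

instance {α β : Type*} : DecidableRel (completeBipartiteGraph α β).Adj := fun v w => by
  simp only [completeBipartiteGraph]; infer_instance

theorem cb_degree_inl (a b : ℕ) (x : Fin a) :
    (completeBipartiteGraph (Fin a) (Fin b)).degree (Sum.inl x) = b := by
  rw [← SimpleGraph.card_neighborFinset_eq_degree]
  have : (completeBipartiteGraph (Fin a) (Fin b)).neighborFinset (Sum.inl x)
      = Finset.univ.map Function.Embedding.inr := by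
    ext v; cases v <;> simp
  rw [this]; simp

theorem cb_degree_inr (a b : ℕ) (x : Fin b) :
    (completeBipartiteGraph (Fin a) (Fin b)).degree (Sum.inr x) = a := by
  rw [← SimpleGraph.card_neighborFinset_eq_degree]
  have : (completeBipartiteGraph (Fin a) (Fin b)).neighborFinset (Sum.inr x)
      = Finset.univ.map Function.Embedding.inl := by
    ext v; cases v <;> simp
  rw [this]; simp

theorem cb_edges (a b : ℕ) :
    (completeBipartiteGraph (Fin a) (Fin b)).edgeFinset.card = a * b := by
  have h := (completeBipartiteGraph (Fin a) (Fin b)).sum_degrees_eq_twice_card_edges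
  simp only [Fintype.sum_sum_type, cb_degree_inl, cb_degree_inr, Finset.sum_const,
    Finset.card_univ, Fintype.card_fin, smul_eq_mul] at h
  have h2 : b * a = a * b := Nat.mul_comm b a
  omega

theorem cb_irr (a b : ℕ) (h : b < a) :
    irr (completeBipartiteGraph (Fin a) (Fin b)) = (a * b : ℤ) * (a - b) := by
  have hab : (0 : ℤ) ≤ (a : ℤ) - b := by omega
  unfold irr
  rw [Finset.sum_congr rfl (g := fun _ => (a : ℤ) - b)]
  · rw [Finset.sum_const, cb_edges]; simp
  · intro e he
    induction e using Sym2.ind with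
    | _ u v =>
      rw [SimpleGraph.mem_edgeFinset, SimpleGraph.mem_edgeSet] at he
      rw [Sym2.lift_mk]
      rcases u with u | u <;> rcases v with v | v
      · simp at he
      · simp only [cb_degree_inl, cb_degree_inr]
        rw [abs_sub_comm, abs_of_nonneg hab]
      · simp only [cb_degree_inl, cb_degree_inr]
        rw [abs_of_nonneg hab]
      · simp at he

theorem stmt_14 (Δ δ : ℕ) (hδ : 1 ≤ δ) (hδΔ : δ < Δ)
    (n m : ℕ) (hn : n = Δ + δ) (hm : m = Δ * δ) :
    Fintype.card (Fin Δ ⊕ Fin δ) = n ∧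
    (completeBipartiteGraph (Fin Δ) (Fin δ)).edgeFinset.card = m ∧
    (∀ v, (completeBipartiteGraph (Fin Δ) (Fin δ)).degree v ≤ Δ) ∧
    (∃ v, (completeBipartiteGraph (Fin Δ) (Fin δ)).degree v = Δ) ∧
    (∀ v, δ ≤ (completeBipartiteGraph (Fin Δ) (Fin δ)).degree v) ∧
    (∃ v, (completeBipartiteGraph (Fin Δ) (Fin δ)).degree v = δ) ∧
    (δ : ℝ) ≤ 2 * (m : ℝ) / n ∧
    2 * (m : ℝ) / n ≤ 2 * (Δ : ℝ) * δ / ((Δ : ℝ) + δ) ∧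
    (irr (completeBipartiteGraph (Fin Δ) (Fin δ)) : ℝ) =
      2 * (Δ : ℝ) * m - (δ : ℝ) * Δ * n := by
  subst hn hm
  have h1 : (1 : ℝ) ≤ δ := by exact_mod_cast hδ
  have h2 : (δ : ℝ) < Δ := by exact_mod_cast hδΔ
  refine ⟨by simp, cb_edges Δ δ, ?_, ⟨Sum.inr ⟨0, by omega⟩, cb_degree_inr _ _ _⟩, ?_,
    ⟨Sum.inl ⟨0, by omega⟩, cb_degree_inl _ _ _⟩, ?_, ?_, ?_⟩
  · rintro (v | v)
    · rw [cb_degree_inl]; omega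
    · rw [cb_degree_inr]
  · rintro (v | v)
    · rw [cb_degree_inl]
    · rw [cb_degree_inr]; omega
  · push_cast
    rw [le_div_iff₀ (by linarith)]
    nlinarith
  · push_cast
    rw [mul_assoc]
  · rw [cb_irr Δ δ hδΔ]
    push_cast
    ring
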